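/- Assume V ∈ C¹(ℝ^N), c ∈ ℝ, condition (V^c) and the coercivity condition (1.7). If q ∈ ℳ_c, then J_{c,(α_q,ω_q)}(q) = m_c; moreover, if α_q ∈ ℝ then q(t) = q(α_q) for all t ≤ α_q, and if ω_q ∈ ℝ then q(t) = q(ω_q) for all t ≥ ω_q. -/

import Mathlib

open MeasureTheory Filter Metric Set Topology
open scoped ENNReal

noncomputable section

abbrev Euc (N : ℕ) := EuclideanSpace ℝ (Fin N)

def setDist {E : Type*} [PseudoMetricSpace E] (A B : Set E) : ℝ :=
  sInf ((fun p : E × E => dist p.1 p.2) '' (A ×ˢ B))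

def IsH1loc {N : ℕ} (q q' : ℝ → Euc N) : Prop :=
  LocallyIntegrable q' volume ∧
  (∀ a b : ℝ, IntegrableOn (fun t => ‖q' t‖ ^ 2) (Icc a b) volume) ∧
  (∀ a b : ℝ, q b - q a = ∫ t in a..b, q' t)

def lagJ {N : ℕ} (V : Euc N → ℝ) (c : ℝ) (q q' : ℝ → Euc N) (I : Set ℝ) : ℝ≥0∞ :=
  ∫⁻ t in I, ENNReal.ofReal (2⁻¹ * ‖q' t‖ ^ 2 + (V (q t) - c))

def Gamma {N : ℕ} (V : Euc N → ℝ) (c : ℝ) (Vm Vp : Set (Euc N)) :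
    Set ((ℝ → Euc N) × (ℝ → Euc N)) :=
  {p | IsH1loc p.1 p.2 ∧ (∀ t, c ≤ V (p.1 t)) ∧
    (∀ ε > 0, ∃ᶠ t in atBot, infDist (p.1 t) Vm < ε) ∧
    (∀ ε > 0, ∃ᶠ t in atTop, infDist (p.1 t) Vp < ε)}

def mc {N : ℕ} (V : Euc N → ℝ) (c : ℝ) (Vm Vp : Set (Euc N)) : ℝ≥0∞ :=
  ⨅ (p) (_ : p ∈ Gamma V c Vm Vp), lagJ V c p.1 p.2 univ

def Coercive {N : ℕ} (V : Euc N → ℝ) (c : ℝ) (Vm Vp : Set (Euc N)) (R : ℝ) : Prop :=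
  mc V c Vm Vp =
    ⨅ (p) (_ : p ∈ Gamma V c Vm Vp) (_ : ∀ t, ‖p.1 t‖ ≤ R), lagJ V c p.1 p.2 univ

/-- `ρ₀ := (1/4)·dist(𝒱⁻ ∩ B̄_R(0), 𝒱⁺ ∩ B̄_R(0))`. -/
def rho0 {N : ℕ} (Vm Vp : Set (Euc N)) (R : ℝ) : ℝ :=
  (1 / 4) * setDist (Vm ∩ closedBall 0 R) (Vp ∩ closedBall 0 R)

/-- membership in `ℳ_c`. -/
def MemM {N : ℕ} (V : Euc N → ℝ) (c : ℝ) (Vm Vp : Set (Euc N)) (R : ℝ)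
    (q q' : ℝ → Euc N) : Prop :=
  (q, q') ∈ Gamma V c Vm Vp ∧
  infDist (q 0) {x | V x ≤ c} = rho0 Vm Vp R ∧
  lagJ V c q q' univ = mc V c Vm Vp ∧
  (∀ t, ‖q t‖ ≤ R)

/-- `α_q` (valued in `[-∞,+∞]`, with `−∞` when `q(ℝ) ∩ 𝒱⁻ = ∅`). -/
def alphaQ {N : ℕ} (Vm : Set (Euc N)) (q : ℝ → Euc N) : EReal :=
  sSup {x : EReal | ∃ t : ℝ, x = (t : EReal) ∧ q t ∈ Vm}

/-- `ω_q` (valued in `[-∞,+∞]`, with `+∞` when there is no `t > α_q` with `q(t) ∈ 𝒱⁺`). -/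
def omegaQ {N : ℕ} (Vm Vp : Set (Euc N)) (q : ℝ → Euc N) : EReal :=
  sInf {x : EReal | ∃ t : ℝ, x = (t : EReal) ∧ alphaQ Vm q < (t : EReal) ∧ q t ∈ Vp}

/-- reflection of `q` with respect to `b` (used for `t > b`). -/
def reflPlus {N : ℕ} (q : ℝ → Euc N) (b : ℝ) : ℝ → Euc N :=
  fun t => if t ≤ b then q t else q (2 * b - t)

/-- reflection of `q` with respect to `a` (used for `t < a`). -/
def reflMinus {N : ℕ} (q : ℝ → Euc N) (a : ℝ) : ℝ → Euc N :=
  fun t => if a ≤ t then q t else q (2 * a - t)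

/-- ω-limit set `Ω_q := ⋂_{t > α_q} closure {q(s) : s ≥ t}`. -/
def omegaLimitSet {N : ℕ} (Vm : Set (Euc N)) (q : ℝ → Euc N) : Set (Euc N) :=
  ⋂ (t : ℝ) (_ : alphaQ Vm q < (t : EReal)), closure (q '' Ici t)

/-- α-limit set `𝒜_q := ⋂_{t < ω_q} closure {q(s) : s ≤ t}`. -/
def alphaLimitSet {N : ℕ} (Vm Vp : Set (Euc N)) (q : ℝ → Euc N) : Set (Euc N) :=
  ⋂ (t : ℝ) (_ : (t : EReal) < omegaQ Vm Vp q), closure (q '' Iic t)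

/-!
The idea is to stop a curve: once it touches a zero of `V - c` in `𝒱₊` it may rest there forever at
no cost, and it may likewise rest in `𝒱₋` until its departure. A minimizer `q` therefore spends no
action after a visit to `𝒱₊` or before a visit to `𝒱₋`, provided that `m_c` is finite, so `q` itself
rests then. In particular `q⁻¹(𝒱₋)` is a closed lower set, hence equal to `{t | t ≤ α_q}`, and
dually `q⁻¹(𝒱₊) = {t | ω_q ≤ t}`, so the complement of `(α_q, ω_q)` carries no action. Finiteness
of `m_c` comes from a line through points of `𝒱₋` and `𝒱₊`, stopped at its last exit from `𝒱₋` and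
its next entrance into `𝒱₊`.
-/

section LinearOrder

theorem exists_Ioo_disjoint_of_isClosed {α : Type*} [LinearOrder α] [TopologicalSpace α]
    [OrderClosedTopology α] [CompactIccSpace α] {A B : Set α} (hA : IsClosed A) (hB : IsClosed B)
    (hAB : Disjoint A B) {x y : α} (hx : x ∈ A) (hy : y ∈ B) (hxy : x ≤ y) :
    ∃ a ∈ A, ∃ b ∈ B, a < b ∧ Disjoint (Ioo a b) (A ∪ B) := by
  obtain ⟨a, ⟨haA, -, hay⟩, ha_last⟩ :=
    (isCompact_Icc.inter_left hA).exists_isGreatest ⟨x, hx, le_rfl, hxy⟩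
  obtain ⟨b, ⟨hbB, hab, hby⟩, hb_first⟩ :=
    (isCompact_Icc.inter_left hB).exists_isLeast ⟨y, hy, hay, le_rfl⟩
  refine ⟨a, haA, b, hbB, hab.lt_of_ne (hAB.ne_of_mem haA hbB), ?_⟩
  rw [Set.disjoint_left]
  rintro t ⟨hat, htb⟩ (htA | htB)
  · have hxa : x ≤ a := ha_last ⟨hx, le_rfl, hxy⟩
    exact hat.not_ge (ha_last ⟨htA, hxa.trans hat.le, htb.le.trans hby⟩)
  · exact htb.not_ge (hb_first ⟨htB, hat.le, htb.le.trans hby⟩)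

theorem measure_eq_zero_of_forall_measure_Iic_eq_zero {α : Type*} [LinearOrder α]
    [TopologicalSpace α] [ClosedIciTopology α] [SecondCountableTopology α] {_ : MeasurableSpace α}
    {μ : Measure α} {A : Set α} (h : ∀ x ∈ A, μ (Iic x) = 0) : μ A = 0 := by
  refine measure_null_of_locally_null A fun x hx ↦ ?_
  by_cases hmax : ∃ y ∈ A, x < y
  · obtain ⟨y, hy, hxy⟩ := hmax
    exact ⟨Iic y, mem_nhdsWithin_of_mem_nhds (Iic_mem_nhds hxy), h y hy⟩
  · push Not at hmax
    exact ⟨Iic x, mem_of_superset self_mem_nhdsWithin hmax, h x hx⟩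

theorem measure_eq_zero_of_forall_measure_Ici_eq_zero {α : Type*} [LinearOrder α]
    [TopologicalSpace α] [ClosedIicTopology α] [SecondCountableTopology α] {_ : MeasurableSpace α}
    {μ : Measure α} {A : Set α} (h : ∀ x ∈ A, μ (Ici x) = 0) : μ A = 0 :=
  measure_eq_zero_of_forall_measure_Iic_eq_zero (α := αᵒᵈ) h

end LinearOrder

section Distance

variable {E : Type*} [PseudoMetricSpace E] {A B : Set E}

theorem setDist_le_dist {x y : E} (hx : x ∈ A) (hy : y ∈ B) : setDist A B ≤ dist x y :=
  csInf_le ⟨0, forall_mem_image.2 fun _ _ ↦ dist_nonneg⟩ ⟨(x, y), ⟨hx, hy⟩, rfl⟩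

theorem disjoint_of_setDist_pos (h : 0 < setDist A B) : Disjoint A B :=
  Set.disjoint_left.2 fun x hA hB ↦ h.not_ge (by simpa using setDist_le_dist hA hB)

theorem nonempty_of_setDist_pos (h : 0 < setDist A B) : A.Nonempty ∧ B.Nonempty := by
  rw [← prod_nonempty_iff, nonempty_iff_ne_empty]
  intro hempty
  simp [setDist, hempty] at h

theorem frequently_infDist_lt_of_eventually_mem {ι : Type*} {l : Filter ι} [l.NeBot] {u : ι → E}
    (h : ∀ᶠ i in l, u i ∈ A) : ∀ ε > 0, ∃ᶠ i in l, infDist (u i) A < ε :=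
  fun _ hε ↦ (h.mono fun _ hi ↦ (infDist_zero_of_mem hi).trans_lt hε).frequently

end Distance

section Curves

variable {N : ℕ} {V : Euc N → ℝ} {c : ℝ} {Vm Vp : Set (Euc N)} {q q' : ℝ → Euc N}

section TimeStop

/-- A change of time `φ` that runs as usual during `S` and stands still off `S`, used to stop
curves. Standing still is encoded by the identity `Ioc_inter`, which is what makes `S.indicator q'`
a derivative of `q ∘ φ` whenever `q'` is one of `q`. -/
structure IsTimeStop (φ : ℝ → ℝ) (S : Set ℝ) : Prop where
  measurableSet : MeasurableSet S
  eqOn : EqOn φ id S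
  Ioc_inter : ∀ a b, Ioc a b ∩ S = Ioc (φ a) (φ b)

theorem isTimeStop_max (T : ℝ) : IsTimeStop (max · T) (Ioi T) where
  measurableSet := measurableSet_Ioi
  eqOn _ ht := max_eq_left_of_lt ht
  Ioc_inter a b := by ext; grind

theorem isTimeStop_min (T : ℝ) : IsTimeStop (min · T) (Iic T) where
  measurableSet := measurableSet_Iic
  eqOn _ ht := min_eq_left ht
  Ioc_inter a b := by ext; grind

namespace IsTimeStop

variable {φ ψ : ℝ → ℝ} {S S' : Set ℝ}

theorem comp (hφ : IsTimeStop φ S) (hψ : IsTimeStop ψ S') : IsTimeStop (φ ∘ ψ) (S' ∩ S) where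
  measurableSet := hψ.measurableSet.inter hφ.measurableSet
  eqOn t ht := (congrArg φ (hψ.eqOn ht.1)).trans (hφ.eqOn ht.2)
  Ioc_inter a b := by rw [← inter_assoc, hψ.Ioc_inter, hφ.Ioc_inter, Function.comp, Function.comp]

theorem intervalIntegral_indicator {E : Type*} [NormedAddCommGroup E] [NormedSpace ℝ E]
    (hφ : IsTimeStop φ S) (f : ℝ → E) (a b : ℝ) :
    ∫ t in a..b, S.indicator f t = ∫ t in φ a..φ b, f t := by
  simp only [intervalIntegral, setIntegral_indicator hφ.measurableSet, hφ.Ioc_inter]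

end IsTimeStop

end TimeStop

namespace IsH1loc

theorem continuous (hq : IsH1loc q q') : Continuous q := by
  have hprimitive : q = fun b ↦ q 0 + ∫ t in (0 : ℝ)..b, q' t :=
    funext fun b ↦ by rw [← hq.2.2 0 b, add_sub_cancel]
  rw [hprimitive]
  exact continuous_const.add (intervalIntegral.continuous_primitive (fun a b ↦
    (hq.1.integrableOn_isCompact isCompact_uIcc).intervalIntegrable) 0)

theorem lineMap (x y : Euc N) : IsH1loc (AffineMap.lineMap x y) fun _ ↦ y - x := by
  refine ⟨locallyIntegrable_const _, fun a b ↦ continuous_const.integrableOn_Icc, fun a b ↦ ?_⟩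
  rw [intervalIntegral.integral_const, AffineMap.lineMap_apply_module',
    AffineMap.lineMap_apply_module']
  module

theorem comp_timeStop (hq : IsH1loc q q') {φ : ℝ → ℝ} {S : Set ℝ} (hφ : IsTimeStop φ S) :
    IsH1loc (q ∘ φ) (S.indicator q') := by
  refine ⟨hq.1.indicator hφ.measurableSet, fun a b ↦ ?_, fun a b ↦ ?_⟩
  · have hsq : (fun t ↦ ‖S.indicator q' t‖ ^ 2) = S.indicator fun t ↦ ‖q' t‖ ^ 2 := by
      ext t
      by_cases ht : t ∈ S <;> simp [ht]
    rw [hsq]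
    exact (hq.2.1 a b).indicator hφ.measurableSet
  · rw [hφ.intervalIntegral_indicator]
    exact hq.2.2 _ _

end IsH1loc

section Action

/-- The action `I ↦ J_{c,I}(q)` of a curve, as a measure on the time axis. -/
def actionMeasure (V : Euc N → ℝ) (c : ℝ) (q q' : ℝ → Euc N) : Measure ℝ :=
  volume.withDensity fun t ↦ ENNReal.ofReal (2⁻¹ * ‖q' t‖ ^ 2 + (V (q t) - c))

theorem actionMeasure_apply (I : Set ℝ) : actionMeasure V c q q' I = lagJ V c q q' I :=
  withDensity_apply' _ I

theorem lagJ_congr_set {I J : Set ℝ} (h : I =ᵐ[volume] J) :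
    lagJ V c q q' I = lagJ V c q q' J :=
  setLIntegral_congr h

theorem lagJ_eq_univ_of_compl {I : Set ℝ} (h : lagJ V c q q' Iᶜ = 0) :
    lagJ V c q q' I = lagJ V c q q' univ := by
  rw [← actionMeasure_apply] at h
  simpa only [actionMeasure_apply] using measure_congr (ae_eq_univ.2 h)

theorem lagJ_compl_eq_zero {S : Set ℝ} (hS : MeasurableSet S) (hfin : lagJ V c q q' univ ≠ ⊤)
    (hle : lagJ V c q q' univ ≤ lagJ V c q q' S) : lagJ V c q q' Sᶜ = 0 := by
  simp only [← actionMeasure_apply] at hfin hle ⊢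
  rw [measure_compl hS (measure_ne_top_of_subset (subset_univ S) hfin), tsub_eq_zero_of_le hle]

theorem lagJ_Ioc_lt_top (hV : Continuous V) (hq : IsH1loc q q') (a b : ℝ) :
    lagJ V c q q' (Ioc a b) < ⊤ :=
  have hint : IntegrableOn (fun t ↦ 2⁻¹ * ‖q' t‖ ^ 2 + (V (q t) - c)) (Icc a b) volume :=
    ((hq.2.1 a b).const_mul _).add
      ((hV.comp hq.continuous).sub continuous_const).integrableOn_Icc
  (hint.mono_set Ioc_subset_Icc_self).lintegral_lt_top

theorem lagJ_comp_timeStop {φ : ℝ → ℝ} {S : Set ℝ} (hφ : IsTimeStop φ S)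
    (hrest : ∀ t ∉ S, V (q (φ t)) = c) :
    lagJ V c (q ∘ φ) (S.indicator q') univ = lagJ V c q q' S := by
  rw [lagJ, lagJ, Measure.restrict_univ, ← lintegral_indicator hφ.measurableSet]
  refine lintegral_congr fun t ↦ ?_
  by_cases ht : t ∈ S
  · simp [ht, hφ.eqOn ht]
  · simp [ht, hrest t ht]

theorem ae_eq_zero_of_lagJ_eq_zero {I : Set ℝ} (hI : MeasurableSet I)
    (hq' : AEStronglyMeasurable q' volume) (hc : ∀ t ∈ I, c ≤ V (q t))
    (h0 : lagJ V c q q' I = 0) : ∀ᵐ t, t ∈ I → q' t = 0 := by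
  have hkin : ∫⁻ t in I, ENNReal.ofReal (2⁻¹ * ‖q' t‖ ^ 2) = 0 := by
    refine le_antisymm (h0 ▸ setLIntegral_mono' hI fun t ht ↦ ?_) bot_le
    exact ENNReal.ofReal_le_ofReal (le_add_of_nonneg_right (sub_nonneg.2 (hc t ht)))
  have hmeas : AEMeasurable (fun t ↦ ENNReal.ofReal (2⁻¹ * ‖q' t‖ ^ 2)) (volume.restrict I) :=
    ((hq'.norm.aemeasurable.pow_const 2).const_mul _).ennreal_ofReal.restrict
  rw [lintegral_eq_zero_iff' hmeas, EventuallyEq, ae_restrict_iff' hI] at hkin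
  filter_upwards [hkin] with t ht htI
  simpa using (ENNReal.ofReal_eq_zero.1 (ht htI)).antisymm (by positivity)

theorem IsH1loc.eq_of_lagJ_eq_zero (hq : IsH1loc q q') {I : Set ℝ} (hI : I.OrdConnected)
    (hc : ∀ t ∈ I, c ≤ V (q t)) (h0 : lagJ V c q q' I = 0) {s t : ℝ} (hs : s ∈ I) (ht : t ∈ I) :
    q s = q t := by
  rw [eq_comm, ← sub_eq_zero, hq.2.2 s t]
  refine intervalIntegral.integral_zero_ae ?_
  filter_upwards [ae_eq_zero_of_lagJ_eq_zero hI.measurableSet hq.1.aestronglyMeasurable hc h0]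
    with u hu hust
  exact hu (hI.uIcc_subset hs ht (uIoc_subset_uIcc hust))

end Action

section Competitors

theorem mc_le_lagJ_of_isTimeStop (hq : IsH1loc q q') {φ : ℝ → ℝ} {S : Set ℝ}
    (hφ : IsTimeStop φ S) (hrest : ∀ t ∉ S, V (q (φ t)) = c) (hc : ∀ t ∈ S, c ≤ V (q t))
    (hbot : ∀ ε > 0, ∃ᶠ t in atBot, infDist (q (φ t)) Vm < ε)
    (htop : ∀ ε > 0, ∃ᶠ t in atTop, infDist (q (φ t)) Vp < ε) :
    mc V c Vm Vp ≤ lagJ V c q q' S := by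
  have hadm : ∀ t, c ≤ V (q (φ t)) := fun t ↦ by
    by_cases ht : t ∈ S
    · exact (hc t ht).trans_eq (by rw [hφ.eqOn ht, id])
    · exact (hrest t ht).ge
  have hmem : (q ∘ φ, S.indicator q') ∈ Gamma V c Vm Vp := ⟨hq.comp_timeStop hφ, hadm, hbot, htop⟩
  exact (iInf₂_le _ hmem).trans_eq (lagJ_comp_timeStop hφ hrest)

theorem mc_le_lagJ_Ioi (hq : (q, q') ∈ Gamma V c Vm Vp) {T : ℝ} (hT : q T ∈ Vm)
    (hVT : V (q T) = c) : mc V c Vm Vp ≤ lagJ V c q q' (Ioi T) := by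
  obtain ⟨hH1, hc, -, htop⟩ := hq
  refine mc_le_lagJ_of_isTimeStop hH1 (isTimeStop_max T) (fun t ht ↦ ?_) (fun t _ ↦ hc t)
    (frequently_infDist_lt_of_eventually_mem ?_) fun ε hε ↦ ?_
  · rwa [max_eq_right (not_lt.1 ht)]
  · filter_upwards [eventually_le_atBot T] with t ht
    rwa [max_eq_right ht]
  · refine ((htop ε hε).and_eventually (eventually_ge_atTop T)).mono fun t ht ↦ ?_
    rw [max_eq_left ht.2]
    exact ht.1

theorem mc_le_lagJ_Iic (hq : (q, q') ∈ Gamma V c Vm Vp) {T : ℝ} (hT : q T ∈ Vp)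
    (hVT : V (q T) = c) : mc V c Vm Vp ≤ lagJ V c q q' (Iic T) := by
  obtain ⟨hH1, hc, hbot, -⟩ := hq
  refine mc_le_lagJ_of_isTimeStop hH1 (isTimeStop_min T) (fun t ht ↦ ?_) (fun t _ ↦ hc t)
    (fun ε hε ↦ ?_) (frequently_infDist_lt_of_eventually_mem ?_)
  · rwa [min_eq_right (not_le.1 ht).le]
  · refine ((hbot ε hε).and_eventually (eventually_le_atBot T)).mono fun t ht ↦ ?_
    rw [min_eq_left ht.2]
    exact ht.1
  · filter_upwards [eventually_ge_atTop T] with t ht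
    rwa [min_eq_right ht]

theorem mc_le_lagJ_Ioc (hq : IsH1loc q q') {a b : ℝ} (hab : a ≤ b) (ha : q a ∈ Vm)
    (hb : q b ∈ Vp) (hVa : V (q a) = c) (hVb : V (q b) = c) (hc : ∀ t ∈ Ioc a b, c ≤ V (q t)) :
    mc V c Vm Vp ≤ lagJ V c q q' (Ioc a b) := by
  have hclamp := (isTimeStop_min b).comp (isTimeStop_max a)
  rw [Ioi_inter_Iic] at hclamp
  have hleft : ∀ t ≤ a, ((min · b) ∘ (max · a)) t = a := fun t ht ↦ by simp [ht, hab]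
  have hright : ∀ t ≥ b, ((min · b) ∘ (max · a)) t = b := fun t ht ↦ by simp [show b ≤ t from ht]
  refine mc_le_lagJ_of_isTimeStop hq hclamp (fun t ht ↦ ?_) hc
    (frequently_infDist_lt_of_eventually_mem ?_) (frequently_infDist_lt_of_eventually_mem ?_)
  · rcases le_or_gt t a with hta | hat
    · rwa [hleft t hta]
    · rwa [hright t (not_le.1 fun htb ↦ ht ⟨hat, htb⟩).le]
  · filter_upwards [eventually_le_atBot a] with t ht
    rwa [hleft t ht]
  · filter_upwards [eventually_ge_atTop b] with t ht
    rwa [hright t ht]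

theorem mc_lt_top (hV : Continuous V) (hVm : IsClosed Vm) (hVp : IsClosed Vp)
    (hm : Vm.Nonempty) (hp : Vp.Nonempty) (hdisj : Disjoint Vm Vp)
    (hsplit : {x | V x ≤ c} = Vm ∪ Vp) : mc V c Vm Vp < ⊤ := by
  obtain ⟨x, hx⟩ := hm
  obtain ⟨y, hy⟩ := hp
  let l : ℝ → Euc N := AffineMap.lineMap x y
  have hl : IsH1loc l fun _ ↦ y - x := .lineMap x y
  obtain ⟨a, ha, b, hb, hab, hbetween⟩ : ∃ a ∈ l ⁻¹' Vm, ∃ b ∈ l ⁻¹' Vp, a < b ∧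
      Disjoint (Ioo a b) (l ⁻¹' Vm ∪ l ⁻¹' Vp) :=
    exists_Ioo_disjoint_of_isClosed (hVm.preimage hl.continuous) (hVp.preimage hl.continuous)
      (hdisj.preimage l) (by simpa [l] using hx) (by simpa [l] using hy) zero_le_one
  rw [← preimage_union, ← hsplit] at hbetween
  have hge : ∀ t ∈ Icc a b, c ≤ V (l t) := by
    rw [← closure_Ioo hab.ne]
    exact le_on_closure (fun t ht ↦ (not_le.1 (disjoint_left.1 hbetween ht)).le)
      continuousOn_const (hV.comp hl.continuous).continuousOn
  have hVa : V (l a) ≤ c := hsplit.ge (Or.inl ha)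
  have hVb : V (l b) ≤ c := hsplit.ge (Or.inr hb)
  calc mc V c Vm Vp ≤ lagJ V c l (fun _ ↦ y - x) (Ioc a b) :=
        mc_le_lagJ_Ioc hl hab.le ha hb (hVa.antisymm (hge a (left_mem_Icc.2 hab.le)))
          (hVb.antisymm (hge b (right_mem_Icc.2 hab.le))) fun t ht ↦ hge t (Ioc_subset_Icc_self ht)
    _ < ⊤ := lagJ_Ioc_lt_top hV hl a b

end Competitors

section Minimizer

theorem lagJ_Iic_eq_zero_of_mem (hq : (q, q') ∈ Gamma V c Vm Vp)
    (hmin : lagJ V c q q' univ = mc V c Vm Vp) (hfin : mc V c Vm Vp ≠ ⊤) {T : ℝ}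
    (hT : q T ∈ Vm) (hVT : V (q T) = c) : lagJ V c q q' (Iic T) = 0 := by
  rw [← compl_Ioi]
  exact lagJ_compl_eq_zero measurableSet_Ioi (hmin ▸ hfin) (hmin ▸ mc_le_lagJ_Ioi hq hT hVT)

theorem lagJ_Ici_eq_zero_of_mem (hq : (q, q') ∈ Gamma V c Vm Vp)
    (hmin : lagJ V c q q' univ = mc V c Vm Vp) (hfin : mc V c Vm Vp ≠ ⊤) {T : ℝ}
    (hT : q T ∈ Vp) (hVT : V (q T) = c) : lagJ V c q q' (Ici T) = 0 := by
  rw [← lagJ_congr_set Ioi_ae_eq_Ici, ← compl_Iic]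
  exact lagJ_compl_eq_zero measurableSet_Iic (hmin ▸ hfin) (hmin ▸ mc_le_lagJ_Iic hq hT hVT)

theorem setOf_coe_le_alphaQ (hVm : IsClosed Vm) (hq : Continuous q)
    (hlower : IsLowerSet (q ⁻¹' Vm)) : {t : ℝ | (t : EReal) ≤ alphaQ Vm q} = q ⁻¹' Vm := by
  refine Subset.antisymm (fun t ht ↦ ?_) fun t ht ↦
    show (t : EReal) ≤ alphaQ Vm q from le_sSup ⟨t, rfl, ht⟩
  by_contra htV
  obtain ⟨s, hst, hs⟩ := ((hVm.preimage hq).isOpen_compl.eventually_mem htV).exists_lt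
  have hle : alphaQ Vm q ≤ s := sSup_le <| by
    rintro _ ⟨u, rfl, hu⟩
    exact EReal.coe_le_coe_iff.2 (le_of_not_ge fun hsu ↦ hs (hlower hsu hu))
  exact hst.not_ge (EReal.coe_le_coe_iff.1 (le_trans ht hle))

theorem setOf_omegaQ_le_coe (hVp : IsClosed Vp) (hq : Continuous q)
    (hupper : IsUpperSet (q ⁻¹' Vp)) (hα : ∀ t, q t ∈ Vp → alphaQ Vm q < t) :
    {t : ℝ | omegaQ Vm Vp q ≤ t} = q ⁻¹' Vp := by
  refine Subset.antisymm (fun t ht ↦ ?_) fun t ht ↦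
    show omegaQ Vm Vp q ≤ t from sInf_le ⟨t, rfl, hα t ht, ht⟩
  by_contra htV
  obtain ⟨s, hts, hs⟩ := ((hVp.preimage hq).isOpen_compl.eventually_mem htV).exists_gt
  have hle : s ≤ omegaQ Vm Vp q := le_sInf <| by
    rintro _ ⟨u, rfl, -, hu⟩
    exact EReal.coe_le_coe_iff.2 (le_of_not_ge fun hus ↦ hs (hupper hus hu))
  exact hts.not_ge (EReal.coe_le_coe_iff.1 (le_trans hle ht))

theorem lagJ_Ioo_alphaQ_omegaQ (hα : {t : ℝ | (t : EReal) ≤ alphaQ Vm q} = q ⁻¹' Vm)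
    (hω : {t : ℝ | omegaQ Vm Vp q ≤ t} = q ⁻¹' Vp)
    (hbefore : ∀ T, q T ∈ Vm → lagJ V c q q' (Iic T) = 0)
    (hafter : ∀ T, q T ∈ Vp → lagJ V c q q' (Ici T) = 0) :
    lagJ V c q q' {t : ℝ | alphaQ Vm q < t ∧ t < omegaQ Vm Vp q} = lagJ V c q q' univ := by
  have hcompl : {t : ℝ | alphaQ Vm q < t ∧ t < omegaQ Vm Vp q}ᶜ = q ⁻¹' Vm ∪ q ⁻¹' Vp := by
    rw [← hα, ← hω]
    ext t
    simp only [mem_compl_iff, mem_ofPred_eq, not_and_or, not_lt, mem_union]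
  refine lagJ_eq_univ_of_compl ?_
  simp only [← actionMeasure_apply] at hbefore hafter ⊢
  rw [hcompl]
  exact measure_union_null (measure_eq_zero_of_forall_measure_Iic_eq_zero hbefore)
    (measure_eq_zero_of_forall_measure_Ici_eq_zero hafter)

theorem minimizer_action_on_interval_general (hV : Continuous V) (hVm : IsClosed Vm)
    (hVp : IsClosed Vp) (hm : Vm.Nonempty) (hp : Vp.Nonempty) (hdisj : Disjoint Vm Vp)
    (hsplit : {x | V x ≤ c} = Vm ∪ Vp) (hq : (q, q') ∈ Gamma V c Vm Vp)
    (hmin : lagJ V c q q' univ = mc V c Vm Vp) :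
    lagJ V c q q' {t : ℝ | alphaQ Vm q < (t : EReal) ∧ (t : EReal) < omegaQ Vm Vp q}
      = mc V c Vm Vp ∧
    (∀ a : ℝ, alphaQ Vm q = (a : EReal) → ∀ t, t ≤ a → q t = q a) ∧
    (∀ b : ℝ, omegaQ Vm Vp q = (b : EReal) → ∀ t, b ≤ t → q t = q b) := by
  have hfin : mc V c Vm Vp ≠ ⊤ := (mc_lt_top hV hVm hVp hm hp hdisj hsplit).ne
  have hVq : ∀ t, q t ∈ Vm ∪ Vp → V (q t) = c := fun t ht ↦
    le_antisymm (hsplit.ge ht) (hq.2.1 t)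
  have hbefore : ∀ T, q T ∈ Vm → lagJ V c q q' (Iic T) = 0 := fun T hT ↦
    lagJ_Iic_eq_zero_of_mem hq hmin hfin hT (hVq T (Or.inl hT))
  have hafter : ∀ T, q T ∈ Vp → lagJ V c q q' (Ici T) = 0 := fun T hT ↦
    lagJ_Ici_eq_zero_of_mem hq hmin hfin hT (hVq T (Or.inr hT))
  have hrest_before : ∀ T, q T ∈ Vm → ∀ t, t ≤ T → q t = q T := fun T hT t ht ↦
    hq.1.eq_of_lagJ_eq_zero ordConnected_Iic (fun t _ ↦ hq.2.1 t) (hbefore T hT) ht self_mem_Iic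
  have hrest_after : ∀ T, q T ∈ Vp → ∀ t, T ≤ t → q t = q T := fun T hT t ht ↦
    hq.1.eq_of_lagJ_eq_zero ordConnected_Ici (fun t _ ↦ hq.2.1 t) (hafter T hT) ht self_mem_Ici
  have hα : {t : ℝ | (t : EReal) ≤ alphaQ Vm q} = q ⁻¹' Vm :=
    setOf_coe_le_alphaQ hVm hq.1.continuous fun T t htT hT ↦
      mem_preimage.2 ((hrest_before T hT t htT).symm ▸ hT)
  have hω : {t : ℝ | omegaQ Vm Vp q ≤ t} = q ⁻¹' Vp :=
    setOf_omegaQ_le_coe hVp hq.1.continuous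
      (fun T t hTt hT ↦ mem_preimage.2 ((hrest_after T hT t hTt).symm ▸ hT))
      fun t ht ↦ not_le.1 fun hle ↦ disjoint_right.1 hdisj ht (hα.le hle)
  exact ⟨hmin ▸ lagJ_Ioo_alphaQ_omegaQ hα hω hbefore hafter,
    fun a ha ↦ hrest_before a (hα.le ha.ge), fun b hb ↦ hrest_after b (hω.le hb.le)⟩

end Minimizer

end Curves

/-- Lemma 2.7: the whole action of a minimizer is carried by `(α_q, ω_q)`, and the
minimizer is constant before `α_q` and after `ω_q` (when these are finite). -/
theorem minimizer_action_on_interval {N : ℕ} (hN : 0 < N) (V : Euc N → ℝ) (hV : ContDiff ℝ 1 V)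
    (c : ℝ) (Vm Vp : Set (Euc N)) (hVm : IsClosed Vm) (hVp : IsClosed Vp)
    (hsplit : {x | V x ≤ c} = Vm ∪ Vp) (hsep : 0 < setDist Vm Vp)
    (R : ℝ) (hR : 0 < R) (hcoer : Coercive V c Vm Vp R)
    (q q' : ℝ → Euc N) (hq : MemM V c Vm Vp R q q') :
    lagJ V c q q' {t : ℝ | alphaQ Vm q < (t : EReal) ∧ (t : EReal) < omegaQ Vm Vp q}
      = mc V c Vm Vp ∧
    (∀ a : ℝ, alphaQ Vm q = (a : EReal) → ∀ t, t ≤ a → q t = q a) ∧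
    (∀ b : ℝ, omegaQ Vm Vp q = (b : EReal) → ∀ t, b ≤ t → q t = q b) := by
  obtain ⟨hm, hp⟩ := nonempty_of_setDist_pos hsep
  exact minimizer_action_on_interval_general hV.continuous hVm hVp hm hp
    (disjoint_of_setDist_pos hsep) hsplit hq.1 hq.2.2.1
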